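/- Let G and H be binary structures. If the rainbow relation algebra B_{G,H} is completely representable, then for all distinct i, i' ∈ G there exist j, j' ∈ H such that {(i,j),(i',j')} is a partial homomorphism from G to H. -/

import Mathlib

/-! ## Binary structures -/

/-- A binary structure: a carrier set together with a family of binary relations
indexed by a signature `σ` consisting of binary predicate symbols. -/
structure BinStruct (σ : Type) : Type 1 where
  V : Type
  rel : σ → V → V → Prop

variable {σ : Type}

/-- The partial map `{(i,j),(i',j')}` is a partial homomorphism from `G` to `H`:
for all distinct elements of the domain and every binary predicate, the predicate
is preserved. -/
def PartialHom2 (G H : BinStruct σ) (i i' : G.V) (j j' : H.V) : Prop :=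
  ∀ b : σ, (G.rel b i i' → H.rel b j j') ∧ (G.rel b i' i → H.rel b j' j)

/-- `f` is a (total) homomorphism from `G` to `H`. -/
def IsHom (G H : BinStruct σ) (f : G.V → H.V) : Prop :=
  ∀ (b : σ) (u v : G.V), u ≠ v → G.rel b u v → H.rel b (f u) (f v)

/-! ## The rainbow atom structure -/

/-- Atoms of the rainbow relation algebra `B_{G,H}`. -/
inductive RbAtom (α β : Type) : Type
  | id : RbAtom α β
  | black : RbAtom α β
  | white : RbAtom α β
  | yellow : RbAtom α β
  | green (i : α) : RbAtom α β
  | red (j j' : β) : RbAtom α β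

namespace RbAtom

/-- Converse of an atom: all atoms are self-converse except `(red j j')⌣ = red j' j`. -/
def conv {α β : Type} : RbAtom α β → RbAtom α β
  | red j j' => red j' j
  | a => a

end RbAtom

/-- The generating forbidden triples (I)–(VI) of the rainbow algebra `B_{G,H}`. -/
inductive BaseForbidden (G H : BinStruct σ) :
    RbAtom G.V H.V → RbAtom G.V H.V → RbAtom G.V H.V → Prop
  | ident (a b : RbAtom G.V H.V) : a ≠ b → BaseForbidden G H .id a b
  | ggg (i i' i'' : G.V) : BaseForbidden G H (.green i) (.green i') (.green i'')
  | ggw (i i' : G.V) : BaseForbidden G H (.green i) (.green i') .white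
  | yyy : BaseForbidden G H .yellow .yellow .yellow
  | yyb : BaseForbidden G H .yellow .yellow .black
  | rrr (j₁ j₂ j₂' j₃' j₁s j₃s : H.V) : ¬(j₁ = j₁s ∧ j₂ = j₂' ∧ j₃' = j₃s) →
      BaseForbidden G H (.red j₁ j₂) (.red j₂' j₃') (.red j₁s j₃s)
  | ggr (i i' : G.V) (j j' : H.V) : ¬(i ≠ i' ∧ PartialHom2 G H i i' j j') →
      BaseForbidden G H (.green i) (.green i') (.red j j')

/-- A triple of atoms is forbidden if it is a Peircean transform of one of the
generating forbidden triples. -/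
def Forbidden (G H : BinStruct σ) (a b c : RbAtom G.V H.V) : Prop :=
  ∃ x y z : RbAtom G.V H.V, BaseForbidden G H x y z ∧
    ((a, b, c) = (x, y, z) ∨ (a, b, c) = (x.conv, z, y) ∨ (a, b, c) = (z, y.conv, x) ∨
     (a, b, c) = (y.conv, x.conv, z.conv) ∨ (a, b, c) = (y, z.conv, x.conv) ∨
     (a, b, c) = (z.conv, x, y.conv))

/-! ## The rainbow relation algebra (complex algebra of the atom structure) -/

/-- Composition in the complex algebra: `c ≤ X ; Y` iff there are `a ∈ X`, `b ∈ Y`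
such that the triple `(a, b, c)` is not forbidden. -/
def rbComp (G H : BinStruct σ) (X Y : Set (RbAtom G.V H.V)) : Set (RbAtom G.V H.V) :=
  {c | ∃ a ∈ X, ∃ b ∈ Y, ¬ Forbidden G H a b c}

/-- Converse in the complex algebra. -/
def rbConv {α β : Type} (X : Set (RbAtom α β)) : Set (RbAtom α β) :=
  {a | RbAtom.conv a ∈ X}

/-- The rainbow relation algebra `B_{G,H}` is completely representable: there is an
isomorphism onto an algebra of binary relations on some base set (with union,
complement, relational composition, converse and the identity relation) carrying
all suprema to unions. -/
def CompletelyRepresentable (G H : BinStruct σ) : Prop :=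
  ∃ (X : Type) (θ : Set (RbAtom G.V H.V) → Set (X × X)),
    Function.Injective θ ∧
    (∀ S : Set (Set (RbAtom G.V H.V)), θ (⋃₀ S) = ⋃₀ (θ '' S)) ∧
    (∀ A : Set (RbAtom G.V H.V), θ Aᶜ = θ Set.univ \ θ A) ∧
    (∀ A B : Set (RbAtom G.V H.V),
        θ (rbComp G H A B) = {p : X × X | ∃ z : X, (p.1, z) ∈ θ A ∧ (z, p.2) ∈ θ B}) ∧
    (∀ A : Set (RbAtom G.V H.V), θ (rbConv A) = {p : X × X | (p.2, p.1) ∈ θ A}) ∧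
    θ {RbAtom.id} = {p : X × X | p.1 = p.2}

/-! ## The colouring game -/

/-- The set of vertices coloured (according to the interpretation `g`) with exactly
the colours in a palette `π`. -/
def PaletteSet {V : Type} {c : ℕ} (g : Fin c → Set V) (π : Set (Fin c)) : Set V :=
  {x | ∀ t : Fin c, x ∈ g t ↔ t ∈ π}

/-- The position `(g,h)` of the `c`-colour colouring game on `(G,H)` is an immediate
win for ∀: (C1) some palette is realised in exactly one of the two structures, or
(C2) some pair of palettes and binary predicate produce a nonempty intersection in
exactly one of the two structures. -/
def ColWin (G H : BinStruct σ) (c : ℕ)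
    (g : Fin c → Set G.V) (h : Fin c → Set H.V) : Prop :=
  (∃ π : Set (Fin c), Xor' (PaletteSet g π = ∅) (PaletteSet h π = ∅)) ∨
  (∃ (π π' : Set (Fin c)) (b : σ),
      Xor' ((PaletteSet g π ×ˢ PaletteSet g π') ∩ {q | G.rel b q.1 q.2} = ∅)
           ((PaletteSet h π ×ˢ PaletteSet h π') ∩ {q | H.rel b q.1 q.2} = ∅))

/-- `∃` has a winning strategy in the infinitely long `c`-colour colouring game
`G^c_ω(G,H)` starting from the position `(g,h)`: there is an invariant family of safe
positions containing `(g,h)`, avoiding wins for `∀`, such that every move of `∀`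
(a colour together with a set of vertices of either structure) has a response by `∃`
(a set of vertices of the other structure) staying in the family. -/
def ExSurvives (G H : BinStruct σ) (c : ℕ)
    (g : Fin c → Set G.V) (h : Fin c → Set H.V) : Prop :=
  ∃ Inv : (Fin c → Set G.V) → (Fin c → Set H.V) → Prop,
    Inv g h ∧
    (∀ g' h', Inv g' h' → ¬ ColWin G H c g' h') ∧
    (∀ g' h', Inv g' h' → ∀ (t : Fin c) (S : Set G.V), ∃ T : Set H.V,
        Inv (Function.update g' t S) (Function.update h' t T)) ∧
    (∀ g' h', Inv g' h' → ∀ (t : Fin c) (T : Set H.V), ∃ S : Set G.V,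
        Inv (Function.update g' t S) (Function.update h' t T))

/-- `∀` can force a win in the colouring game from the position `(g,h)`:
either the position is already a win for him, or he has a move such that
every response of `∃` leads to a position from which he can force a win. -/
inductive AllForcesWin (G H : BinStruct σ) (c : ℕ) :
    (Fin c → Set G.V) → (Fin c → Set H.V) → Prop
  | now (g h) : ColWin G H c g h → AllForcesWin G H c g h
  | moveG (g h) (t : Fin c) (S : Set G.V) :
      (∀ T : Set H.V,
        AllForcesWin G H c (Function.update g t S) (Function.update h t T)) →
      AllForcesWin G H c g h
  | moveH (g h) (t : Fin c) (T : Set H.V) :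
      (∀ S : Set G.V,
        AllForcesWin G H c (Function.update g t S) (Function.update h t T)) →
      AllForcesWin G H c g h

/-! ## Relation algebras, terms and formulas -/

/-- A relation algebra (Tarski's axioms): a Boolean algebra with an associative,
additive composition `;` with two-sided identity `1'`, and an additive involutive
converse satisfying the Peircean/Tarski axioms. -/
class RelationAlgebra (A : Type) extends BooleanAlgebra A where
  comp : A → A → A
  conv : A → A
  one' : A
  comp_assoc : ∀ x y z : A, comp (comp x y) z = comp x (comp y z)
  comp_one' : ∀ x : A, comp x one' = x
  one'_comp : ∀ x : A, comp one' x = x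
  sup_comp : ∀ x y z : A, comp (x ⊔ y) z = comp x z ⊔ comp y z
  comp_sup : ∀ x y z : A, comp x (y ⊔ z) = comp x y ⊔ comp x z
  conv_conv : ∀ x : A, conv (conv x) = x
  conv_sup : ∀ x y : A, conv (x ⊔ y) = conv x ⊔ conv y
  conv_comp : ∀ x y : A, conv (comp x y) = comp (conv y) (conv x)
  tarski : ∀ x y : A, comp (conv x) (comp x y)ᶜ ⊓ y = ⊥

/-- A relation algebra is representable (a member of RRA) if it is isomorphic to a
subalgebra of an algebra of binary relations on some base set, with union,
complement, relational composition, converse and the identity relation. -/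
def Representable (A : Type) [RelationAlgebra A] : Prop :=
  ∃ (X : Type) (θ : A → Set (X × X)),
    Function.Injective θ ∧
    (∀ a b : A, θ (a ⊔ b) = θ a ∪ θ b) ∧
    (∀ a : A, θ aᶜ = θ ⊤ \ θ a) ∧
    (∀ a b : A, θ (RelationAlgebra.comp a b) =
        {p : X × X | ∃ z : X, (p.1, z) ∈ θ a ∧ (z, p.2) ∈ θ b}) ∧
    (∀ a : A, θ (RelationAlgebra.conv a) = {p : X × X | (p.2, p.1) ∈ θ a}) ∧
    θ RelationAlgebra.one' = {p : X × X | p.1 = p.2}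

/-- A signature of relation-algebra operations on a carrier `A` (used to interpret
relation-algebra terms both in abstract relation algebras and in the concrete
rainbow complex algebras). -/
structure RAOps (A : Type) where
  bot : A
  top : A
  one' : A
  sup : A → A → A
  inf : A → A → A
  compl : A → A
  comp : A → A → A
  conv : A → A

/-- The operations of an abstract relation algebra. -/
def RAOps.ofClass (A : Type) [RelationAlgebra A] : RAOps A :=
  ⟨⊥, ⊤, RelationAlgebra.one', (· ⊔ ·), (· ⊓ ·), (·ᶜ), RelationAlgebra.comp,
    RelationAlgebra.conv⟩

/-- The operations of the rainbow complex algebra `B_{G,H}`. -/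
def rbOps (G H : BinStruct σ) : RAOps (Set (RbAtom G.V H.V)) :=
  ⟨∅, Set.univ, {RbAtom.id}, (· ∪ ·), (· ∩ ·), (·ᶜ), rbComp G H, rbConv⟩

/-- Terms in the language of relation algebras with variables `x_0, …, x_{c-1}`. -/
inductive RATerm (c : ℕ) : Type
  | var (i : Fin c) : RATerm c
  | bot : RATerm c
  | top : RATerm c
  | one' : RATerm c
  | sup (s t : RATerm c) : RATerm c
  | inf (s t : RATerm c) : RATerm c
  | compl (t : RATerm c) : RATerm c
  | comp (s t : RATerm c) : RATerm c
  | conv (t : RATerm c) : RATerm c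

namespace RATerm

variable {c : ℕ} {A : Type}

/-- Evaluation of a term under a total assignment of the variables. -/
def eval (ops : RAOps A) (v : Fin c → A) : RATerm c → A
  | var i => v i
  | bot => ops.bot
  | top => ops.top
  | one' => ops.one'
  | sup s t => ops.sup (s.eval ops v) (t.eval ops v)
  | inf s t => ops.inf (s.eval ops v) (t.eval ops v)
  | compl t => ops.compl (t.eval ops v)
  | comp s t => ops.comp (s.eval ops v) (t.eval ops v)
  | conv t => ops.conv (t.eval ops v)

/-- Evaluation of a term under a partial assignment of the variables; defined
just when every variable of the term lies in the domain of the assignment. -/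
def evalo (ops : RAOps A) (v : Fin c → Option A) : RATerm c → Option A
  | var i => v i
  | bot => some ops.bot
  | top => some ops.top
  | one' => some ops.one'
  | sup s t => (s.evalo ops v).bind fun a => (t.evalo ops v).map fun b => ops.sup a b
  | inf s t => (s.evalo ops v).bind fun a => (t.evalo ops v).map fun b => ops.inf a b
  | compl t => (t.evalo ops v).map ops.compl
  | comp s t => (s.evalo ops v).bind fun a => (t.evalo ops v).map fun b => ops.comp a b
  | conv t => (t.evalo ops v).map ops.conv

/-- The variables occurring in a term. -/
def vars : RATerm c → Finset (Fin c)
  | var i => {i}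
  | bot => ∅
  | top => ∅
  | one' => ∅
  | sup s t => s.vars ∪ t.vars
  | inf s t => s.vars ∪ t.vars
  | compl t => t.vars
  | comp s t => s.vars ∪ t.vars
  | conv t => t.vars

end RATerm

/-- First-order formulas in the language of relation algebras with variables
`x_0, …, x_{c-1}`. -/
inductive RAFormula (c : ℕ) : Type
  | eq (s t : RATerm c) : RAFormula c
  | not (φ : RAFormula c) : RAFormula c
  | and (φ ψ : RAFormula c) : RAFormula c
  | ex (i : Fin c) (φ : RAFormula c) : RAFormula c

namespace RAFormula

variable {c : ℕ} {A : Type}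

/-- Quantifier depth of a formula. -/
def qd : RAFormula c → ℕ
  | eq _ _ => 0
  | not φ => φ.qd
  | and φ ψ => max φ.qd ψ.qd
  | ex _ φ => φ.qd + 1

/-- Free variables of a formula. -/
def freeVars : RAFormula c → Finset (Fin c)
  | eq s t => s.vars ∪ t.vars
  | not φ => φ.freeVars
  | and φ ψ => φ.freeVars ∪ ψ.freeVars
  | ex i φ => φ.freeVars \ {i}

/-- Satisfaction of a formula under a total assignment of the variables. -/
def Sat (ops : RAOps A) (v : Fin c → A) : RAFormula c → Prop
  | eq s t => s.eval ops v = t.eval ops v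
  | not φ => ¬ Sat ops v φ
  | and φ ψ => Sat ops v φ ∧ Sat ops v ψ
  | ex i φ => ∃ a : A, Sat ops (Function.update v i a) φ

end RAFormula

/-! ## The pebble equivalence game on relation algebras -/

/-- The position `(α,β)` of the pebble game is good for `∃`: the two partial maps have
the same domain and the correspondence `t^α ↦ t^β` between the generated subalgebras
(given by evaluating terms whose variables lie in the common domain) is a well-defined
isomorphism. -/
def GoodPos {A B : Type} (opsA : RAOps A) (opsB : RAOps B) (c : ℕ)
    (α : Fin c → Option A) (β : Fin c → Option B) : Prop :=
  (∀ i : Fin c, (α i).isSome ↔ (β i).isSome) ∧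
  ∀ s t : RATerm c,
    (s.evalo opsA α = t.evalo opsA α ↔ s.evalo opsB β = t.evalo opsB β)

/-- `∃` has a winning strategy in the `c`-pebble, `n`-round equivalence game
`Γ^c_n(A, α, B, β)` (for finite `n`). -/
def ExWinsPebble {A B : Type} (opsA : RAOps A) (opsB : RAOps B) (c : ℕ) :
    ℕ → (Fin c → Option A) → (Fin c → Option B) → Prop
  | 0, α, β => GoodPos opsA opsB c α β
  | n + 1, α, β => GoodPos opsA opsB c α β ∧
      (∀ (t : Fin c) (a : A), ∃ b : B,
        ExWinsPebble opsA opsB c n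
          (Function.update α t (some a)) (Function.update β t (some b))) ∧
      (∀ (t : Fin c) (b : B), ∃ a : A,
        ExWinsPebble opsA opsB c n
          (Function.update α t (some a)) (Function.update β t (some b)))

/-- `∃` has a winning strategy in the infinitely long `c`-pebble equivalence game
`Γ^c_ω(A, α, B, β)`. -/
def ExWinsPebbleOmega {A B : Type} (opsA : RAOps A) (opsB : RAOps B) (c : ℕ)
    (α : Fin c → Option A) (β : Fin c → Option B) : Prop :=
  ∃ Inv : (Fin c → Option A) → (Fin c → Option B) → Prop,
    Inv α β ∧
    (∀ α' β', Inv α' β' → GoodPos opsA opsB c α' β') ∧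
    (∀ α' β', Inv α' β' → ∀ (t : Fin c) (a : A), ∃ b : B,
        Inv (Function.update α' t (some a)) (Function.update β' t (some b))) ∧
    (∀ α' β', Inv α' β' → ∀ (t : Fin c) (b : B), ∃ a : A,
        Inv (Function.update α' t (some a)) (Function.update β' t (some b)))

/-- `∃` has a winning strategy in the `c`-pebble, `n`-round equivalence game, where
`n ≤ ω` (`n : ℕ∞`). -/
def ExWinsPebbleE {A B : Type} (opsA : RAOps A) (opsB : RAOps B) (c : ℕ)
    (n : ℕ∞) (α : Fin c → Option A) (β : Fin c → Option B) : Prop :=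
  match n with
  | ⊤ => ExWinsPebbleOmega opsA opsB c α β
  | (m : ℕ) => ExWinsPebble opsA opsB c m α β

/-! ## The mirroring strategy -/

/-- The set of green subscripts of an element of a rainbow algebra. -/
def greenPart {V F : Type} (x : Set (RbAtom V F)) : Set V := {i | RbAtom.green i ∈ x}

/-- The element of the other rainbow algebra with the same non-green part as `x` and
green part determined by `Y`. -/
def mirrorElt {V W F : Type} (x : Set (RbAtom V F)) (Y : Set W) : Set (RbAtom W F) :=
  fun a => match a with
  | RbAtom.green j => j ∈ Y
  | RbAtom.id => RbAtom.id ∈ x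
  | RbAtom.black => RbAtom.black ∈ x
  | RbAtom.white => RbAtom.white ∈ x
  | RbAtom.yellow => RbAtom.yellow ∈ x
  | RbAtom.red j j' => RbAtom.red j j' ∈ x

/-- Inclusion of the first `c` colours into the `c+3` colours of the parallel game. -/
def liftCol {c : ℕ} (t : Fin c) : Fin (c + 3) := Fin.castLE (Nat.le_add_right c 3) t

/-- A combined state of a play of the pebble game `Γ^c(B_{G,F}, B_{H,F})` together
with the parallel play of the colouring game `G^{c+3}_ω(G,H)`, recording also the
set of colours used so far. -/
structure MirrorState (c : ℕ) (G H F : BinStruct σ) : Type where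
  α : Fin c → Option (Set (RbAtom G.V F.V))
  β : Fin c → Option (Set (RbAtom H.V F.V))
  g : Fin (c + 3) → Set G.V
  h : Fin (c + 3) → Set H.V
  used : Set (Fin (c + 3))

/-- The initial state: no pebbles placed, all vertices uncoloured, no colour used. -/
def mirrorInit (c : ℕ) (G H F : BinStruct σ) : MirrorState c G H F :=
  ⟨fun _ => none, fun _ => none, fun _ => ∅, fun _ => ∅, ∅⟩

/-- `Inv` is a winning invariant witnessing a winning strategy for `∃` in the
colouring game `G^c_ω(G,H)` (from the initial position). -/
def IsColInvariant (G H : BinStruct σ) (c : ℕ)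
    (Inv : (Fin c → Set G.V) → (Fin c → Set H.V) → Prop) : Prop :=
  Inv (fun _ => ∅) (fun _ => ∅) ∧
  (∀ g h, Inv g h → ¬ ColWin G H c g h) ∧
  (∀ g h, Inv g h → ∀ (t : Fin c) (S : Set G.V), ∃ T : Set H.V,
      Inv (Function.update g t S) (Function.update h t T)) ∧
  (∀ g h, Inv g h → ∀ (t : Fin c) (T : Set H.V), ∃ S : Set G.V,
      Inv (Function.update g t S) (Function.update h t T))

/-- One round of the pebble game `Γ^c(B_{G,F}, B_{H,F})` in which `∃` plays the
mirroring strategy induced by the colouring-game winning strategy witnessed by the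
invariant `Inv`: when `∀` plays pebble `t` on an element of one algebra, `∃` colours
the set of its green subscripts with colour `t` in the parallel colouring game,
obtains a response keeping the parallel play inside `Inv`, and answers with the
element with identical non-green part and green part determined by that response. -/
inductive MirrorStep (G H F : BinStruct σ) (c : ℕ)
    (Inv : (Fin (c + 3) → Set G.V) → (Fin (c + 3) → Set H.V) → Prop) :
    MirrorState c G H F → MirrorState c G H F → Prop
  | fromG (s : MirrorState c G H F) (t : Fin c) (x : Set (RbAtom G.V F.V)) (Y : Set H.V) :
      Inv (Function.update s.g (liftCol t) (greenPart x))
          (Function.update s.h (liftCol t) Y) →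
      MirrorStep G H F c Inv s
        ⟨Function.update s.α t (some x),
         Function.update s.β t (some (mirrorElt x Y)),
         Function.update s.g (liftCol t) (greenPart x),
         Function.update s.h (liftCol t) Y,
         insert (liftCol t) s.used⟩
  | fromH (s : MirrorState c G H F) (t : Fin c) (y : Set (RbAtom H.V F.V)) (X : Set G.V) :
      Inv (Function.update s.g (liftCol t) X)
          (Function.update s.h (liftCol t) (greenPart y)) →
      MirrorStep G H F c Inv s
        ⟨Function.update s.α t (some (mirrorElt y X)),
         Function.update s.β t (some y),
         Function.update s.g (liftCol t) X,
         Function.update s.h (liftCol t) (greenPart y),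
         insert (liftCol t) s.used⟩

/-- The states reachable in a play of the pebble game `Γ^c(B_{G,F}, B_{H,F})`
during which `∃` plays using the mirroring strategy. -/
def MirrorReachable (G H F : BinStruct σ) (c : ℕ)
    (Inv : (Fin (c + 3) → Set G.V) → (Fin (c + 3) → Set H.V) → Prop)
    (s : MirrorState c G H F) : Prop :=
  Relation.ReflTransGen (MirrorStep G H F c Inv) (mirrorInit c G H F) s

/-! A representation sends composition injectively to composition of relations, so composition in
`B_{G,H}` is associative. Since `b ≤ g_{i'} ; y` and `y ≤ g_i ; b`, we get
`y ≤ g_i ; (g_{i'} ; y) = (g_i ; g_{i'}) ; y`, hence `y ≤ c ; y` for some atom `c ≤ g_i ; g_{i'}`.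
Rules (I) and (II) keep `c` from being the identity, white or green, and rule (III) keeps it from
being yellow or black. So `c` is red, say `r_{j,j'}`, and rule (V) makes `{(i,j),(i',j')}` a partial
homomorphism. -/

theorem RbAtom.conv_conv {α β : Type} (a : RbAtom α β) : a.conv.conv = a := by
  cases a <;> rfl

section Forbidden

variable {G H : BinStruct σ} {a b c : RbAtom G.V H.V}

theorem BaseForbidden.forbidden (h : BaseForbidden G H a b c) : Forbidden G H a b c :=
  ⟨a, b, c, h, .inl rfl⟩

theorem Forbidden.peircean_left (h : Forbidden G H a b c) : Forbidden G H a.conv c b := by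
  obtain ⟨x, y, z, hbase, htransform⟩ := h
  refine ⟨x, y, z, hbase, ?_⟩
  simp only [Prod.mk.injEq] at htransform ⊢
  rcases htransform with ⟨rfl, rfl, rfl⟩ | ⟨rfl, rfl, rfl⟩ | ⟨rfl, rfl, rfl⟩ |
    ⟨rfl, rfl, rfl⟩ | ⟨rfl, rfl, rfl⟩ | ⟨rfl, rfl, rfl⟩ <;> simp [RbAtom.conv_conv]

theorem Forbidden.peircean_right (h : Forbidden G H a b c) : Forbidden G H c b.conv a := by
  obtain ⟨x, y, z, hbase, htransform⟩ := h
  refine ⟨x, y, z, hbase, ?_⟩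
  simp only [Prod.mk.injEq] at htransform ⊢
  rcases htransform with ⟨rfl, rfl, rfl⟩ | ⟨rfl, rfl, rfl⟩ | ⟨rfl, rfl, rfl⟩ |
    ⟨rfl, rfl, rfl⟩ | ⟨rfl, rfl, rfl⟩ | ⟨rfl, rfl, rfl⟩ <;> simp [RbAtom.conv_conv]

theorem forbidden_id_right (h : a ≠ b.conv) : Forbidden G H a b .id := by
  simpa only [RbAtom.conv_conv] using
    (BaseForbidden.ident b.conv a h.symm).forbidden.peircean_right

theorem not_forbidden_green_yellow_black (i : G.V) :
    ¬ Forbidden G H (.green i) .yellow .black := by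
  rintro ⟨x, y, z, hbase, htransform⟩
  cases hbase <;> simp [RbAtom.conv] at htransform

theorem not_forbidden_green_black_yellow (i : G.V) :
    ¬ Forbidden G H (.green i) .black .yellow :=
  fun h => not_forbidden_green_yellow_black i h.peircean_left

theorem exists_eq_red_of_not_forbidden {i i' : G.V} (hne : i ≠ i')
    (hgreen : ¬ Forbidden G H (.green i) (.green i') c)
    (hyellow : ¬ Forbidden G H .yellow .yellow c) : ∃ j j', c = .red j j' := by
  cases c with
  | id => exact absurd (forbidden_id_right (by simpa [RbAtom.conv] using hne)) hgreen
  | black => exact absurd BaseForbidden.yyb.forbidden hyellow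
  | white => exact absurd (BaseForbidden.ggw i i').forbidden hgreen
  | yellow => exact absurd BaseForbidden.yyy.forbidden hyellow
  | green k => exact absurd (BaseForbidden.ggg i i' k).forbidden hgreen
  | red j j' => exact ⟨j, j', rfl⟩

theorem partialHom2_of_not_forbidden {i i' : G.V} {j j' : H.V}
    (h : ¬ Forbidden G H (.green i) (.green i') (.red j j')) : PartialHom2 G H i i' j j' := by
  by_contra hpartial
  exact h (BaseForbidden.ggr i i' j j' fun hred => hpartial hred.2).forbidden

end Forbidden

section Associativity

variable {G H : BinStruct σ}

theorem exists_not_forbidden_of_associative {a b c d e : RbAtom G.V H.V}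
    (hassoc : Std.Associative (rbComp G H)) (had : ¬ Forbidden G H a d e)
    (hbc : ¬ Forbidden G H b c d) :
    ∃ f, ¬ Forbidden G H a b f ∧ ¬ Forbidden G H f c e := by
  have hmem : e ∈ rbComp G H {a} (rbComp G H {b} {c}) :=
    ⟨a, rfl, d, ⟨b, rfl, c, rfl, hbc⟩, had⟩
  rw [← hassoc.assoc] at hmem
  obtain ⟨f, ⟨_, rfl, _, rfl, hab⟩, _, rfl, hfc⟩ := hmem
  exact ⟨f, hab, hfc⟩

theorem CompletelyRepresentable.associative_rbComp (h : CompletelyRepresentable G H) :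
    Std.Associative (rbComp G H) := by
  obtain ⟨X, θ, hinj, -, -, hcomp, -⟩ := h
  have : Std.Associative (SetRel.comp : SetRel X X → SetRel X X → SetRel X X) :=
    ⟨SetRel.comp_assoc⟩
  have hsemiconj : Function.Semiconj₂ (θ : _ → SetRel X X) (rbComp G H) SetRel.comp := hcomp
  exact hsemiconj.isAssociative_left hinj

end Associativity

theorem completelyRepresentable_partialHom_general (G H : BinStruct σ)
    (hassoc : Std.Associative (rbComp G H)) :
    ∀ i i' : G.V, i ≠ i' → ∃ j j' : H.V, PartialHom2 G H i i' j j' := by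
  intro i i' hne
  obtain ⟨c, hgreen, hcy⟩ := exists_not_forbidden_of_associative hassoc
    (not_forbidden_green_black_yellow i) (not_forbidden_green_yellow_black i')
  have hyellow : ¬ Forbidden G H .yellow .yellow c := mt Forbidden.peircean_right hcy
  obtain ⟨j, j', rfl⟩ := exists_eq_red_of_not_forbidden hne hgreen hyellow
  exact ⟨j, j', partialHom2_of_not_forbidden hgreen⟩

theorem completelyRepresentable_partialHom {σ : Type} (G H : BinStruct σ)
    (h : CompletelyRepresentable G H) :
    ∀ i i' : G.V, i ≠ i' → ∃ j j' : H.V, PartialHom2 G H i i' j j' :=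
  completelyRepresentable_partialHom_general G H h.associative_rbComp
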